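/- For any finite simple graph G of order n with minimum degree δ ≥ k, where k ≥ 1 is an integer, writing δ̂ = δ − k + 1 and b_{k−1} = C(δ, k−1), the k-domination number satisfies both γ_k(G) ≤ (1 − δ̂ / ((1+δ̂)^{1+1/δ̂} · b_{k−1}^{1/δ̂})) · n and γ_k(G) ≤ ((ln(δ − k + 2) + ln b_{k−1} + 1)/(δ − k + 2)) · n. -/

import Mathlib

open Finset Real

/-- The k-domination number: the minimum cardinality of a set X such that every vertex
not in X has at least k neighbours in X. -/
noncomputable def kDomNum {V : Type*} [Fintype V] [DecidableEq V]
    (G : SimpleGraph V) [DecidableRel G.Adj] (k : ℕ) : ℕ :=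
  sInf {m : ℕ | ∃ X : Finset V,
    (∀ v, v ∉ X → k ≤ (G.neighborFinset v ∩ X).card) ∧ m = X.card}

/-!
Put every vertex into a random set `A` independently with probability `p`, then add the vertices
outside `A` that still have fewer than `k` neighbours in `A`. Fix `δ` neighbours of each vertex `v`
and let `d = δ - k + 1`. If `v` has to be added, then `A` misses `v` together with some `d` of these
`δ` neighbours, and `A` misses `d + 1` given vertices with probability `(1 - p) ^ (d + 1)`. Hence
the expected size of the enlarged set is at most `(p + b (1 - p) ^ (d + 1)) n`, where
`b = C(δ, d) = C(δ, k - 1)`. Minimizing over `p` exactly gives the first bound, and using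
`1 - p ≤ exp (-p)` before minimizing gives the second.
-/

section RandomSubset

variable {α ι R : Type*} [Fintype α] [DecidableEq α]

/-- The probability that a random subset of `α`, containing each element independently with
probability `p`, equals `A`. -/
def bernoulliWeight [CommRing R] (p : R) (A : Finset α) : R :=
  p ^ #A * (1 - p) ^ #Aᶜ

lemma bernoulliWeight_nonneg [CommRing R] [LinearOrder R] [IsStrictOrderedRing R] {p : R}
    (hp : p ∈ Set.Icc 0 1) (A : Finset α) : 0 ≤ bernoulliWeight p A :=
  mul_nonneg (pow_nonneg hp.1 _) (pow_nonneg (sub_nonneg.2 hp.2) _)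

lemma sum_bernoulliWeight_disjoint [CommRing R] (p : R) (T : Finset α) :
    ∑ A with Disjoint T A, bernoulliWeight p A = (1 - p) ^ #T := by
  have hfilter : ({A | Disjoint T A} : Finset (Finset α)) = Tᶜ.powerset := by
    ext A
    simp [subset_compl_iff_disjoint_left]
  have hweight : ∀ A ∈ Tᶜ.powerset,
      bernoulliWeight p A = (1 - p) ^ #T * (p ^ #A * (1 - p) ^ (#Tᶜ - #A)) := by
    intro A hA
    have hle : #A ≤ #Tᶜ := card_le_card (mem_powerset.1 hA)
    have hcard : #Aᶜ = #T + (#Tᶜ - #A) := by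
      have hA' := card_add_card_compl A
      have hT' := card_add_card_compl T
      omega
    rw [bernoulliWeight, hcard, pow_add]
    ring
  rw [hfilter, sum_congr rfl hweight, ← mul_sum, sum_pow_mul_eq_add_pow, add_sub_cancel, one_pow,
    mul_one]

lemma sum_bernoulliWeight [CommRing R] (p : R) :
    ∑ A : Finset α, bernoulliWeight p A = 1 := by
  simpa using sum_bernoulliWeight_disjoint p (∅ : Finset α)

lemma sum_bernoulliWeight_mem [CommRing R] (p : R) (v : α) :
    ∑ A with v ∈ A, bernoulliWeight p A = p := by
  have hsplit := sum_filter_add_sum_filter_not univ (v ∈ ·) (bernoulliWeight p)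
  have hnot := sum_bernoulliWeight_disjoint p {v}
  simp only [disjoint_singleton_left, card_singleton, pow_one] at hnot
  rw [sum_bernoulliWeight, hnot] at hsplit
  linear_combination hsplit

lemma sum_bernoulliWeight_mul_card_filter [CommRing R] (p : R) (s : Finset ι)
    (P : ι → Finset α → Prop) [∀ i, DecidablePred (P i)] :
    ∑ A, bernoulliWeight p A * (#{i ∈ s | P i A} : R) =
      ∑ i ∈ s, ∑ A with P i A, bernoulliWeight p A := by
  simp only [card_filter, Nat.cast_sum, Nat.cast_ite, Nat.cast_one, Nat.cast_zero, mul_sum,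
    mul_ite, mul_one, mul_zero, sum_filter]
  exact sum_comm

lemma sum_bernoulliWeight_mul_card [CommRing R] (p : R) :
    ∑ A : Finset α, bernoulliWeight p A * (#A : R) = p * Fintype.card α := by
  have hcount := sum_bernoulliWeight_mul_card_filter p (univ : Finset α) (· ∈ ·)
  simpa [sum_bernoulliWeight_mem, mul_comm] using hcount

lemma exists_le_sum_bernoulliWeight_mul [CommRing R] [LinearOrder R] [IsStrictOrderedRing R]
    {p : R} (hp : p ∈ Set.Icc 0 1) (f : Finset α → R) :
    ∃ A, f A ≤ ∑ B, bernoulliWeight p B * f B := by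
  obtain ⟨A, hA⟩ := Finite.exists_min f
  refine ⟨A, ?_⟩
  calc
    f A = ∑ B, bernoulliWeight p B * f A := by rw [← sum_mul, sum_bernoulliWeight, one_mul]
    _ ≤ ∑ B, bernoulliWeight p B * f B :=
      sum_le_sum fun B _ ↦ mul_le_mul_of_nonneg_left (hA B) (bernoulliWeight_nonneg hp B)

lemma exists_card_add_card_disjoint_le [CommRing R] [LinearOrder R] [IsStrictOrderedRing R]
    {p : R} (hp : p ∈ Set.Icc 0 1) (s : Finset ι) (T : ι → Finset α) :
    ∃ A : Finset α, (#A : R) + #{i ∈ s | Disjoint (T i) A} ≤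
      p * Fintype.card α + ∑ i ∈ s, (1 - p) ^ #(T i) := by
  obtain ⟨A, hA⟩ := exists_le_sum_bernoulliWeight_mul hp
    fun A : Finset α ↦ (#A : R) + #{i ∈ s | Disjoint (T i) A}
  refine ⟨A, hA.trans_eq ?_⟩
  simp only [mul_add, sum_add_distrib, sum_bernoulliWeight_mul_card,
    sum_bernoulliWeight_mul_card_filter p s (fun i A ↦ Disjoint (T i) A),
    sum_bernoulliWeight_disjoint]

end RandomSubset

section Domination

variable {V : Type*} [Fintype V] [DecidableEq V] (G : SimpleGraph V) [DecidableRel G.Adj]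
  {k d δ : ℕ}

/-- `X` is a `k`-dominating set of `G`; this is the condition minimized over in `kDomNum`. -/
def IsKDominating (k : ℕ) (X : Finset V) : Prop :=
  ∀ v, v ∉ X → k ≤ #(G.neighborFinset v ∩ X)

variable {G} in
lemma IsKDominating.kDomNum_le_card {X : Finset V} (hX : IsKDominating G k X) :
    kDomNum G k ≤ #X :=
  Nat.sInf_le ⟨X, hX, rfl⟩

lemma isKDominating_union_filter (k : ℕ) (A : Finset V) :
    IsKDominating G k (A ∪ {v ∈ Aᶜ | #(G.neighborFinset v ∩ A) < k}) := by
  intro v hv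
  simp only [mem_union, mem_filter, mem_compl, not_or, not_and, not_lt] at hv
  exact (hv.2 hv.1).trans (card_le_card (inter_subset_inter_left subset_union_left))

lemma exists_mem_powersetCard_disjoint {α : Type*} [DecidableEq α] {N A : Finset α}
    (hN : d + k ≤ #N + 1) (hA : #(N ∩ A) < k) : ∃ S ∈ N.powersetCard d, Disjoint S A := by
  have hcard : d ≤ #(N \ A) := by
    have hsplit := card_inter_add_card_sdiff N A
    omega
  obtain ⟨S, hS, hSd⟩ := exists_subset_card_eq hcard
  exact ⟨S, mem_powersetCard.2 ⟨hS.trans sdiff_subset, hSd⟩, disjoint_of_subset_left hS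
    sdiff_disjoint⟩

lemma kDomNum_le_card_add_card_disjoint {N : V → Finset V}
    (hN : ∀ v, N v ⊆ G.neighborFinset v) (hNcard : ∀ v, d + k ≤ #(N v) + 1) (A : Finset V) :
    kDomNum G k ≤
      #A + #{x ∈ univ.sigma fun v ↦ (N v).powersetCard d | Disjoint (insert x.1 x.2) A} := by
  set B : Finset V := {v ∈ Aᶜ | #(G.neighborFinset v ∩ A) < k}
  set M := {x ∈ univ.sigma fun v ↦ (N v).powersetCard d | Disjoint (insert x.1 x.2) A}
  have hBM : B ⊆ M.image Sigma.fst := by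
    intro v hv
    obtain ⟨hvA, hvk⟩ := mem_filter.1 hv
    obtain ⟨S, hS, hSA⟩ := exists_mem_powersetCard_disjoint (hNcard v)
      ((card_le_card (inter_subset_inter_right (hN v))).trans_lt hvk)
    refine mem_image.2 ⟨⟨v, S⟩, mem_filter.2 ⟨?_, ?_⟩, rfl⟩
    · exact mem_sigma.2 ⟨mem_univ v, hS⟩
    · exact disjoint_insert_left.2 ⟨mem_compl.1 hvA, hSA⟩
  calc
    kDomNum G k ≤ #(A ∪ B) := (isKDominating_union_filter G k A).kDomNum_le_card
    _ ≤ #A + #B := card_union_le A B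
    _ ≤ #A + #M := by gcongr; exact (card_le_card hBM).trans card_image_le

theorem kDomNum_le_of_forall_le_degree (hδ : ∀ v, δ ≤ G.degree v) (hdk : d + k ≤ δ + 1) {p : ℝ}
    (hp : p ∈ Set.Icc 0 1) :
    (kDomNum G k : ℝ) ≤ (p + δ.choose d * (1 - p) ^ (d + 1)) * Fintype.card V := by
  -- Trimming each neighbourhood to exactly `δ` vertices makes the number of `d`-subsets `C(δ, d)`.
  have htrim : ∀ v, ∃ N ⊆ G.neighborFinset v, #N = δ := fun v ↦
    exists_subset_card_eq (hδ v)
  choose N hN hNcard using htrim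
  obtain ⟨A, hA⟩ := exists_card_add_card_disjoint_le hp
    (univ.sigma fun v ↦ (N v).powersetCard d) (fun x ↦ insert x.1 x.2)
  have hinsert : ∀ v, ∀ S ∈ (N v).powersetCard d, #(insert v S) = d + 1 := by
    intro v S hS
    obtain ⟨hSN, hSd⟩ := mem_powersetCard.1 hS
    have hvS : v ∉ S := fun hv ↦ by simpa using hN v (hSN hv)
    rw [card_insert_of_notMem hvS, hSd]
  have hsum : ∀ v, ∑ S ∈ (N v).powersetCard d, (1 - p) ^ #(insert v S) =
      δ.choose d * (1 - p) ^ (d + 1) := by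
    intro v
    rw [sum_congr rfl fun S hS ↦ by rw [hinsert v S hS], sum_const, card_powersetCard, hNcard,
      nsmul_eq_mul]
  calc
    (kDomNum G k : ℝ) ≤ _ := mod_cast
      kDomNum_le_card_add_card_disjoint G hN (fun v ↦ (hNcard v).symm ▸ hdk) A
    _ ≤ _ := hA
    _ = (p + δ.choose d * (1 - p) ^ (d + 1)) * Fintype.card V := by
      rw [sum_sigma, sum_congr rfl fun v _ ↦ hsum v, sum_const, card_univ, nsmul_eq_mul]
      ring

end Domination

section Optimization

variable {d : ℕ} {b : ℝ}

lemma exists_add_mul_one_sub_pow_eq (hd : d ≠ 0) (hb : 1 ≤ (1 + d) * b) :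
    ∃ p ∈ Set.Icc (0 : ℝ) 1, p + b * (1 - p) ^ (d + 1) =
      1 - d / ((1 + d) ^ (1 + 1 / d : ℝ) * b ^ (1 / d : ℝ)) := by
  have hb0 : 0 < b := pos_of_mul_pos_right (one_pos.trans_le hb) (by positivity)
  -- `p = 1 - r⁻¹` is the critical point: the derivative vanishes iff `(1 + d) b (1 - p) ^ d = 1`.
  set r : ℝ := ((1 + d) * b) ^ (1 / d : ℝ) with hr
  have hr1 : 1 ≤ r := one_le_rpow hb (by positivity)
  have hr0 : 0 < r := one_pos.trans_le hr1
  have hrd : r ^ d = (1 + d) * b := by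
    rw [hr, one_div, rpow_inv_natCast_pow (by positivity) hd]
  have hdenom : (1 + d : ℝ) ^ (1 + 1 / d : ℝ) * b ^ (1 / d : ℝ) = (1 + d) * r := by
    rw [rpow_one_add' (by positivity) (by positivity), hr, mul_rpow (by positivity) hb0.le,
      mul_assoc]
  refine ⟨1 - r⁻¹, ⟨sub_nonneg.2 (inv_le_one_of_one_le₀ hr1),
    sub_le_self 1 (inv_nonneg.2 hr0.le)⟩, ?_⟩
  rw [hdenom, sub_sub_cancel, pow_succ, inv_pow, hrd]
  field_simp
  ring

lemma exists_add_mul_one_sub_pow_le (hb : 1 ≤ (1 + d) * b) :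
    ∃ p ∈ Set.Icc (0 : ℝ) 1, p + b * (1 - p) ^ (d + 1) ≤
      (log (1 + d) + log b + 1) / (1 + d) := by
  have hb0 : 0 < b := pos_of_mul_pos_right (one_pos.trans_le hb) (by positivity)
  -- `p₀` minimizes `p + b * exp (-(1 + d) * p)`, but it may exceed `1`.
  set p₀ : ℝ := log ((1 + d) * b) / (1 + d) with hp₀
  have hp₀_nonneg : 0 ≤ p₀ := div_nonneg (log_nonneg hb) (by positivity)
  have hbound : (log (1 + d) + log b + 1) / (1 + d) = p₀ + 1 / (1 + d) := by
    rw [hp₀, log_mul (by positivity) hb0.ne', add_div]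
  rw [hbound]
  rcases le_total p₀ 1 with hp₀_le | hp₀_ge
  · refine ⟨p₀, ⟨hp₀_nonneg, hp₀_le⟩, add_le_add_right ?_ p₀⟩
    calc
      b * (1 - p₀) ^ (d + 1) ≤ b * exp (-p₀) ^ (d + 1) := by
        gcongr
        exact one_sub_le_exp_neg p₀
      _ = b * exp (-log ((1 + d) * b)) := by
        rw [← exp_nat_mul, hp₀]
        congr 2
        push_cast
        field_simp
        ring
      _ = 1 / (1 + d) := by
        rw [exp_neg, exp_log (by positivity)]
        field_simp
  · refine ⟨1, ⟨zero_le_one, le_rfl⟩, ?_⟩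
    rw [sub_self, zero_pow d.succ_ne_zero, mul_zero, add_zero]
    exact le_add_of_le_of_nonneg hp₀_ge (by positivity)

end Optimization

theorem k_domination_bounds
    {V : Type*} [Fintype V] [DecidableEq V]
    (G : SimpleGraph V) [DecidableRel G.Adj]
    (n : ℕ) (hn : n = Fintype.card V)
    (δ : ℕ) (hδ : δ = G.minDegree)
    (k : ℕ) (hk : 1 ≤ k) (hkδ : k ≤ δ)
    (dh : ℝ) (hdh : dh = (δ : ℝ) - k + 1)
    (b : ℝ) (hb : b = (δ.choose (k - 1) : ℕ)) :
    (kDomNum G k : ℝ) ≤ (1 - dh / ((1 + dh) ^ (1 + 1 / dh) * b ^ (1 / dh))) * n ∧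
    (kDomNum G k : ℝ) ≤
      ((Real.log ((δ : ℝ) - k + 2) + Real.log b + 1) / ((δ : ℝ) - k + 2)) * n := by
  obtain ⟨d, rfl⟩ : ∃ d, δ = k - 1 + d := Nat.exists_eq_add_of_le (by omega)
  have hd : d ≠ 0 := by omega
  have hcast : ((k - 1 + d : ℕ) : ℝ) - k = d - 1 := by
    push_cast [Nat.cast_sub hk]
    ring
  obtain rfl : dh = d := by rw [hdh, hcast, sub_add_cancel]
  rw [Nat.choose_symm_add] at hb
  have hb1 : 1 ≤ b := by
    rw [hb]
    exact_mod_cast Nat.choose_pos (Nat.le_add_left d (k - 1))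
  have hdb : 1 ≤ (1 + d) * b := one_le_mul_of_one_le_of_one_le (by simp) hb1
  have hbound : ∀ p ∈ Set.Icc (0 : ℝ) 1, (kDomNum G k : ℝ) ≤ (p + b * (1 - p) ^ (d + 1)) * n := by
    intro p hp
    rw [hn, hb]
    exact kDomNum_le_of_forall_le_degree G (fun v ↦ hδ ▸ G.minDegree_le_degree v) (by omega) hp
  rw [hcast, show (d : ℝ) - 1 + 2 = 1 + d by ring]
  constructor
  · obtain ⟨p, hp, hpeq⟩ := exists_add_mul_one_sub_pow_eq hd hdb
    exact hpeq ▸ hbound p hp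
  · obtain ⟨p, hp, hple⟩ := exists_add_mul_one_sub_pow_le hdb
    exact (hbound p hp).trans (by gcongr)
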